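/- arXiv:2206.09908 — 2 statements merged into one kernel-verified Lean document; each statement's English description precedes it below -/
import Mathlib

section
/- NEIS never increases the variance of vanilla importance sampling (Proposition H.1, inequality). Let U0, U1 : ℝ^d → ℝ be continuous with ∫_{ℝ^d} exp(−U0(x)) dx = 1, Z1 := ∫_{ℝ^d} exp(−U1(x)) dx < ∞, and ∫_{ℝ^d} exp(−2U1(x) + U0(x)) dx < ∞. Let b be an admissible vector field with global flow X and Jacobian factor J, and assume that for every t ∈ ℝ the map x ↦ X t x is continuously differentiable and satisfies det(D_x(X t ·)(x)) = J t x for all x. Assume moreover that there is an open set Ω₀ ⊆ ℝ^d whose complement has Lebesgue measure zero such that, for each W ∈ {U0, U1, 2U1 − U0}, the functions z ↦ ∫_0^∞ exp(−W(X t z))·J t z dt and z ↦ ∫_{−∞}^0 exp(−W(X t z))·J t z dt are finite-valued and continuous on Ω₀. Then ∫_{ℝ^d} exp(−U0(x)) · A(x)² dx ≤ ∫_{ℝ^d} exp(−2U1(x) + U0(x)) dx; i.e. the second moment of the NEIS estimator is at most the second moment exp(−2(U1 − U0)) of the vanilla importance-sampling estimator, so Var(b) ≤ Var^(max). -/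
/-!
For a density `f` let `O f x = ∫ f (X t x) J t x dt` be its integral along the orbit of `x`. The
densities `exp (-U0)`, `exp (-U1)`, `exp (-(2 U1 - U0))`, written `f₀`, `f₁`, `f₂`, satisfy
`f₁² = f₀ f₂`, so the Cauchy–Schwarz inequality along each orbit gives
`A² = (O f₁ / O f₀)² ≤ O f₂ / O f₀`.

It remains to bound `∫ f₀ (O f₂ / O f₀)`. Substituting `y = X t x` at each time shows that
`∫ g (O f₂) = ∫ f₂(y) (∫ g (X t y) dt) dy`. For `g = f₀ / O f₀` the cocycle property of `J` gives
`g (X t y) = f₀ (X t y) J t y / O f₀ y`, whose integral over `t` is at most `1`.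
-/

open MeasureTheory Filter

noncomputable section

/-- Euclidean state space ℝ^d. -/
abbrev Euc (d : ℕ) := EuclideanSpace ℝ (Fin d)

/-- Divergence of a vector field: trace of the Fréchet derivative. -/
def vdiv {d : ℕ} (b : Euc d → Euc d) (x : Euc d) : ℝ :=
  LinearMap.trace ℝ (Euc d) (fderiv ℝ b x).toLinearMap

/-- A vector field is admissible if it is C¹ with globally bounded derivative. -/
def Admissible {d : ℕ} (b : Euc d → Euc d) : Prop :=
  ContDiff ℝ 1 b ∧ ∃ C : ℝ, ∀ x, ‖fderiv ℝ b x‖ ≤ C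

/-- A global flow of the vector field `b`. -/
def IsGlobalFlow {d : ℕ} (b : Euc d → Euc d) (X : ℝ → Euc d → Euc d) : Prop :=
  (∀ x, X 0 x = x) ∧
  (∀ t s : ℝ, ∀ x, X (t + s) x = X t (X s x)) ∧
  (∀ x : Euc d, ∀ t : ℝ, HasDerivAt (fun τ => X τ x) (b (X t x)) t)

/-- Jacobian factor of the flow: J t x = exp(∫₀ᵗ div b(X s x) ds). -/
def Jac {d : ℕ} (b : Euc d → Euc d) (X : ℝ → Euc d → Euc d) (t : ℝ) (x : Euc d) : ℝ :=
  Real.exp (∫ s in (0:ℝ)..t, vdiv b (X s x))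

open scoped ENNReal

lemma sq_lintegral_le_lintegral_mul_lintegral {α : Type*} [MeasurableSpace α] {μ : Measure α}
    {f g h : α → ℝ≥0∞} (hg : AEMeasurable g μ) (hh : AEMeasurable h μ)
    (hfgh : ∀ a, f a ^ 2 ≤ g a * h a) :
    (∫⁻ a, f a ∂μ) ^ 2 ≤ (∫⁻ a, g a ∂μ) * ∫⁻ a, h a ∂μ := by
  have sq_rpow_half (c : ℝ≥0∞) : (c ^ 2) ^ (1 / 2 : ℝ) = c := by
    rw [← ENNReal.rpow_two, ← ENNReal.rpow_mul]; norm_num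
  have rpow_half_sq (c : ℝ≥0∞) : (c ^ (1 / 2 : ℝ)) ^ 2 = c := by
    rw [← ENNReal.rpow_two, ← ENNReal.rpow_mul]; norm_num
  have hf (a : α) : f a ≤ g a ^ (1 / 2 : ℝ) * h a ^ (1 / 2 : ℝ) := by
    rw [← ENNReal.mul_rpow_of_nonneg _ _ (by norm_num), ← sq_rpow_half (f a)]
    exact ENNReal.rpow_le_rpow (hfgh a) (by norm_num)
  calc (∫⁻ a, f a ∂μ) ^ 2
      ≤ ((∫⁻ a, g a ∂μ) ^ (1 / 2 : ℝ) * (∫⁻ a, h a ∂μ) ^ (1 / 2 : ℝ)) ^ 2 := by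
        gcongr
        exact (lintegral_mono hf).trans <|
          ENNReal.lintegral_mul_norm_pow_le hg hh (by norm_num) (by norm_num) (by norm_num)
    _ = (∫⁻ a, g a ∂μ) * ∫⁻ a, h a ∂μ := by rw [mul_pow, rpow_half_sq, rpow_half_sq]

lemma div_sq_le_div_of_sq_le_mul {a b c : ℝ≥0∞} (h : a ^ 2 ≤ b * c) : (a / b) ^ 2 ≤ c / b :=
  calc (a / b) ^ 2 = a ^ 2 * b⁻¹ ^ 2 := by rw [div_eq_mul_inv, mul_pow]
    _ ≤ b * c * b⁻¹ ^ 2 := by gcongr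
    _ = b * b⁻¹ * (c / b) := by rw [div_eq_mul_inv]; ring
    _ ≤ c / b := mul_le_of_le_one_left' (ENNReal.mul_inv_le_one b)

lemma integrable_of_integrableOn_Iio_Ioi {α F : Type*} [LinearOrder α] [MeasurableSpace α]
    [MeasurableSingletonClass α] [NormedAddCommGroup F] {μ : Measure α} {f : α → F} {a : α}
    (ha : μ {a} ≠ ∞) (hIio : IntegrableOn f (Set.Iio a) μ) (hIoi : IntegrableOn f (Set.Ioi a) μ) :
    Integrable f μ := by
  rw [← integrableOn_univ, ← Set.Iic_union_Ioi (a := a)]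
  exact ((integrableOn_Iic_iff_integrableOn_Iio' ha).2 hIio).union hIoi

lemma exp_neg_sq_eq_mul (u v : ℝ) :
    Real.exp (-v) ^ 2 = Real.exp (-u) * Real.exp (-(2 * v - u)) := by
  rw [← Real.exp_nat_mul, ← Real.exp_add]
  push_cast
  ring_nf

/-- A measurable flow `X` on `(E, μ)`, with times in an additive group, whose Jacobian factor is the
positive cocycle `J`: the last field is the change of variables `μ(dy) = J t x μ(dx)` for
`y = X t x`. -/
structure IsJacobianFlow {G E : Type*} [AddGroup G] [MeasurableSpace G] [MeasurableSpace E]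
    (μ : Measure E) (X : G → E → E) (J : G → E → ℝ) : Prop where
  zero_apply : ∀ x, X 0 x = x
  add_apply : ∀ t s x, X (t + s) x = X t (X s x)
  jac_pos : ∀ t x, 0 < J t x
  jac_add : ∀ t s x, J (t + s) x = J t (X s x) * J s x
  measurable_flow : Measurable (Function.uncurry X)
  measurable_jac : Measurable (Function.uncurry J)
  measurePreserving : ∀ t, MeasurePreserving (X t) (μ.withDensity fun x => ‖J t x‖ₑ) μ

/-- The integral `∫ f (X t x) J t x dν(t)` of a density `f` along the orbit of `x`, as a Lebesgue
integral in `ℝ≥0∞`; for a positive factor `J`, the coefficient `‖J t x‖ₑ` is `J t x` itself. -/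
def orbitIntegral {G E : Type*} [MeasurableSpace G] (ν : Measure G) (X : G → E → E)
    (J : G → E → ℝ) (f : E → ℝ≥0∞) (x : E) : ℝ≥0∞ :=
  ∫⁻ t, f (X t x) * ‖J t x‖ₑ ∂ν

namespace IsJacobianFlow

variable {G E : Type*} [AddGroup G] [MeasurableSpace G] [MeasurableSpace E]
  {ν : Measure G} {μ : Measure E} {X : G → E → E} {J : G → E → ℝ}

lemma neg_apply_apply (hX : IsJacobianFlow μ X J) (t : G) (x : E) : X (-t) (X t x) = x := by
  rw [← hX.add_apply, neg_add_cancel, hX.zero_apply]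

lemma measurable_orbitIntegrand (hX : IsJacobianFlow μ X J) {f : E → ℝ≥0∞} (hf : Measurable f) :
    Measurable fun p : G × E => f (X p.1 p.2) * ‖J p.1 p.2‖ₑ :=
  (hf.comp hX.measurable_flow).mul hX.measurable_jac.enorm

lemma measurable_orbitIntegral [SFinite ν] (hX : IsJacobianFlow μ X J) {f : E → ℝ≥0∞}
    (hf : Measurable f) : Measurable (orbitIntegral ν X J f) :=
  (hX.measurable_orbitIntegrand hf).lintegral_prod_left'

lemma lintegral_jac_mul_comp (hX : IsJacobianFlow μ X J) (t : G) {g : E → ℝ≥0∞}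
    (hg : Measurable g) : ∫⁻ x, ‖J t x‖ₑ * g (X t x) ∂μ = ∫⁻ y, g y ∂μ := by
  have hJ : Measurable fun x => ‖J t x‖ₑ := (hX.measurable_jac.of_uncurry_left (x := t)).enorm
  rw [← (hX.measurePreserving t).lintegral_comp hg]
  exact (lintegral_withDensity_eq_lintegral_mul _ hJ
    (hg.comp (hX.measurePreserving t).measurable)).symm

lemma orbitIntegral_apply_flow_mul [MeasurableAdd G] [ν.IsAddRightInvariant]
    (hX : IsJacobianFlow μ X J) (f : E → ℝ≥0∞) (s : G) (x : E) :
    orbitIntegral ν X J f (X s x) * ‖J s x‖ₑ = orbitIntegral ν X J f x := by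
  unfold orbitIntegral
  rw [← lintegral_mul_const' _ _ enorm_ne_top,
    ← lintegral_add_right_eq_self (fun t => f (X t x) * ‖J t x‖ₑ) s]
  simp only [hX.add_apply, hX.jac_add, enorm_mul, mul_assoc]

lemma div_orbitIntegral_apply_flow [MeasurableAdd G] [ν.IsAddRightInvariant]
    (hX : IsJacobianFlow μ X J) (f : E → ℝ≥0∞) (t : G) (x : E) :
    f (X t x) / orbitIntegral ν X J f (X t x) =
      f (X t x) * ‖J t x‖ₑ / orbitIntegral ν X J f x := by
  rw [← hX.orbitIntegral_apply_flow_mul f t x,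
    ENNReal.mul_div_mul_right _ _ (enorm_ne_zero.2 (hX.jac_pos t x).ne') enorm_ne_top]

lemma lintegral_div_orbitIntegral_le_one [MeasurableAdd G] [ν.IsAddRightInvariant]
    (hX : IsJacobianFlow μ X J) {f : E → ℝ≥0∞} (hf : Measurable f) (x : E) :
    ∫⁻ t, f (X t x) / orbitIntegral ν X J f (X t x) ∂ν ≤ 1 := by
  have hm : Measurable fun t => f (X t x) * ‖J t x‖ₑ :=
    (hX.measurable_orbitIntegrand hf).comp measurable_prodMk_right
  simp only [hX.div_orbitIntegral_apply_flow, div_eq_mul_inv]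
  rw [lintegral_mul_const _ hm]
  exact ENNReal.mul_inv_le_one _

lemma lintegral_mul_orbitIntegral [MeasurableNeg G] [ν.IsNegInvariant] [SFinite ν] [SFinite μ]
    (hX : IsJacobianFlow μ X J) {f g : E → ℝ≥0∞} (hf : Measurable f) (hg : Measurable g) :
    ∫⁻ x, g x * orbitIntegral ν X J f x ∂μ = ∫⁻ y, f y * ∫⁻ t, g (X t y) ∂ν ∂μ := by
  have hgX : Measurable fun p : G × E => g (X p.1 p.2) := hg.comp hX.measurable_flow
  have hgX_neg : Measurable fun p : G × E => g (X (-p.1) p.2) :=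
    hgX.comp (measurable_fst.neg.prodMk measurable_snd)
  calc ∫⁻ x, g x * orbitIntegral ν X J f x ∂μ
      = ∫⁻ x, ∫⁻ t, g x * (f (X t x) * ‖J t x‖ₑ) ∂ν ∂μ := by
        refine lintegral_congr fun x => (lintegral_const_mul _ ?_).symm
        exact (hX.measurable_orbitIntegrand hf).comp measurable_prodMk_right
    _ = ∫⁻ t, ∫⁻ x, g x * (f (X t x) * ‖J t x‖ₑ) ∂μ ∂ν :=
        lintegral_lintegral_swap <| Measurable.aemeasurable <|
          (hg.comp measurable_fst).mul ((hX.measurable_orbitIntegrand hf).comp measurable_swap)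
    _ = ∫⁻ t, ∫⁻ y, f y * g (X (-t) y) ∂μ ∂ν := by
        refine lintegral_congr fun t => ?_
        have hg_neg : Measurable fun y => g (X (-t) y) := hgX_neg.comp measurable_prodMk_left
        refine .trans (lintegral_congr fun x => ?_)
          (hX.lintegral_jac_mul_comp t (hf.mul hg_neg))
        simp only [hX.neg_apply_apply]
        ring
    _ = ∫⁻ y, ∫⁻ t, f y * g (X (-t) y) ∂ν ∂μ :=
        lintegral_lintegral_swap ((hf.comp measurable_snd).mul hgX_neg).aemeasurable
    _ = ∫⁻ y, f y * ∫⁻ t, g (X t y) ∂ν ∂μ := by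
        refine lintegral_congr fun y => ?_
        have hm : Measurable fun t => g (X (-t) y) := hgX_neg.comp measurable_prodMk_right
        rw [lintegral_const_mul _ hm, lintegral_neg_eq_self fun t => g (X t y)]

variable [MeasurableAdd G] [MeasurableNeg G] [ν.IsAddRightInvariant] [ν.IsNegInvariant]
  [SFinite ν] [SFinite μ]

lemma lintegral_mul_orbitIntegral_div_le (hX : IsJacobianFlow μ X J) {f g : E → ℝ≥0∞}
    (hf : Measurable f) (hg : Measurable g) :
    ∫⁻ x, f x * (orbitIntegral ν X J g x / orbitIntegral ν X J f x) ∂μ ≤ ∫⁻ x, g x ∂μ :=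
  calc ∫⁻ x, f x * (orbitIntegral ν X J g x / orbitIntegral ν X J f x) ∂μ
      = ∫⁻ x, f x / orbitIntegral ν X J f x * orbitIntegral ν X J g x ∂μ := by
        simp only [div_eq_mul_inv, mul_assoc, mul_comm (orbitIntegral ν X J g _)]
    _ = ∫⁻ y, g y * ∫⁻ t, f (X t y) / orbitIntegral ν X J f (X t y) ∂ν ∂μ :=
        hX.lintegral_mul_orbitIntegral hg (hf.div (hX.measurable_orbitIntegral hf))
    _ ≤ ∫⁻ y, g y ∂μ :=
        lintegral_mono fun y => mul_le_of_le_one_right' (hX.lintegral_div_orbitIntegral_le_one hf y)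

lemma lintegral_mul_orbitIntegral_div_sq_le (hX : IsJacobianFlow μ X J) {f₀ f₁ f₂ : E → ℝ≥0∞}
    (hf₀ : Measurable f₀) (hf₂ : Measurable f₂) (hf : ∀ x, f₁ x ^ 2 ≤ f₀ x * f₂ x) :
    ∫⁻ x, f₀ x * (orbitIntegral ν X J f₁ x / orbitIntegral ν X J f₀ x) ^ 2 ∂μ ≤
      ∫⁻ x, f₂ x ∂μ := by
  refine (lintegral_mono fun x => ?_).trans
    (hX.lintegral_mul_orbitIntegral_div_le (ν := ν) hf₀ hf₂)
  have hm {f : E → ℝ≥0∞} (hf : Measurable f) : Measurable fun t => f (X t x) * ‖J t x‖ₑ :=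
    (hX.measurable_orbitIntegrand hf).comp measurable_prodMk_right
  gcongr
  refine div_sq_le_div_of_sq_le_mul <|
    sq_lintegral_le_lintegral_mul_lintegral (hm hf₀).aemeasurable (hm hf₂).aemeasurable fun t => ?_
  calc (f₁ (X t x) * ‖J t x‖ₑ) ^ 2 = f₁ (X t x) ^ 2 * ‖J t x‖ₑ ^ 2 := mul_pow _ _ _
    _ ≤ f₀ (X t x) * f₂ (X t x) * ‖J t x‖ₑ ^ 2 := by gcongr; exact hf _
    _ = f₀ (X t x) * ‖J t x‖ₑ * (f₂ (X t x) * ‖J t x‖ₑ) := by ring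

end IsJacobianFlow

section Estimator

variable {G E : Type*} [MeasurableSpace G] {ν : Measure G} {X : G → E → E} {J : G → E → ℝ}

lemma enorm_integral_le_orbitIntegral (ρ : E → ℝ) (x : E) :
    ‖∫ t, ρ (X t x) * J t x ∂ν‖ₑ ≤ orbitIntegral ν X J (fun y => ‖ρ y‖ₑ) x := by
  simpa only [orbitIntegral, enorm_mul] using
    enorm_integral_le_lintegral_enorm fun t => ρ (X t x) * J t x

lemma enorm_integral_eq_orbitIntegral {ρ : E → ℝ} {x : E} (hρ : ∀ y, 0 ≤ ρ y)
    (hJ : ∀ t, 0 ≤ J t x) (hint : Integrable (fun t => ρ (X t x) * J t x) ν) :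
    ‖∫ t, ρ (X t x) * J t x ∂ν‖ₑ = orbitIntegral ν X J (fun y => ‖ρ y‖ₑ) x := by
  have hnonneg (t : G) : 0 ≤ ρ (X t x) * J t x := mul_nonneg (hρ _) (hJ t)
  rw [Real.enorm_of_nonneg (integral_nonneg hnonneg),
    ofReal_integral_eq_lintegral_ofReal hint (ae_of_all _ hnonneg)]
  simp only [orbitIntegral, ← Real.enorm_of_nonneg (hnonneg _), enorm_mul]

lemma enorm_integral_div_integral_le {ρ₀ : E → ℝ} {x : E} (ρ₁ : E → ℝ) (hρ₀ : ∀ y, 0 ≤ ρ₀ y)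
    (hJ : ∀ t, 0 ≤ J t x) (hint : Integrable (fun t => ρ₀ (X t x) * J t x) ν) :
    ‖(∫ t, ρ₁ (X t x) * J t x ∂ν) / ∫ t, ρ₀ (X t x) * J t x ∂ν‖ₑ ≤
      orbitIntegral ν X J (fun y => ‖ρ₁ y‖ₑ) x / orbitIntegral ν X J (fun y => ‖ρ₀ y‖ₑ) x := by
  rw [← enorm_integral_eq_orbitIntegral hρ₀ hJ hint, div_eq_mul_inv, enorm_mul, div_eq_mul_inv]
  gcongr
  · exact enorm_integral_le_orbitIntegral ρ₁ x
  · rcases eq_or_ne (∫ t, ρ₀ (X t x) * J t x ∂ν) 0 with h | h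
    · simp [h]
    · rw [enorm_inv h]

end Estimator

namespace IsJacobianFlow

variable {G E : Type*} [AddGroup G] [MeasurableSpace G] [MeasurableSpace E]
  {ν : Measure G} {μ : Measure E} {X : G → E → E} {J : G → E → ℝ} {ρ₀ ρ₁ ρ₂ : E → ℝ}

lemma measurable_integral [SFinite ν] (hX : IsJacobianFlow μ X J) {ρ : E → ℝ}
    (hρ : Measurable ρ) : Measurable fun x => ∫ t, ρ (X t x) * J t x ∂ν := by
  have hm : Measurable fun p : G × E => ρ (X p.1 p.2) * J p.1 p.2 :=
    (hρ.comp hX.measurable_flow).mul hX.measurable_jac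
  exact hm.stronglyMeasurable.integral_prod_left'.measurable

lemma lintegral_enorm_mul_integral_div_sq_le [MeasurableAdd G] [MeasurableNeg G]
    [ν.IsAddRightInvariant] [ν.IsNegInvariant] [SFinite ν] [SFinite μ]
    (hX : IsJacobianFlow μ X J) (hρ₀m : Measurable ρ₀) (hρ₂m : Measurable ρ₂)
    (hρ₀ : ∀ x, 0 ≤ ρ₀ x) (hρ₂ : ∀ x, 0 ≤ ρ₂ x) (hρ : ∀ x, ρ₁ x ^ 2 ≤ ρ₀ x * ρ₂ x)
    (hint : ∀ᵐ x ∂μ, Integrable (fun t => ρ₀ (X t x) * J t x) ν) :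
    ∫⁻ x, ‖ρ₀ x * ((∫ t, ρ₁ (X t x) * J t x ∂ν) / ∫ t, ρ₀ (X t x) * J t x ∂ν) ^ 2‖ₑ ∂μ ≤
      ∫⁻ x, ‖ρ₂ x‖ₑ ∂μ := by
  have hρ_enorm (x : E) : ‖ρ₁ x‖ₑ ^ 2 ≤ ‖ρ₀ x‖ₑ * ‖ρ₂ x‖ₑ := by
    rw [← enorm_pow, ← enorm_mul, Real.enorm_of_nonneg (sq_nonneg _),
      Real.enorm_of_nonneg (mul_nonneg (hρ₀ x) (hρ₂ x))]
    exact ENNReal.ofReal_le_ofReal (hρ x)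
  refine (lintegral_mono_ae ?_).trans <|
    hX.lintegral_mul_orbitIntegral_div_sq_le (ν := ν) hρ₀m.enorm hρ₂m.enorm hρ_enorm
  filter_upwards [hint] with x hx
  rw [enorm_mul, enorm_pow]
  gcongr
  exact enorm_integral_div_integral_le ρ₁ hρ₀ (fun t => (hX.jac_pos t x).le) hx

end IsJacobianFlow

section Euclidean

variable {d : ℕ} {b : Euc d → Euc d} {X : ℝ → Euc d → Euc d}

lemma continuous_vdiv (hb : ContDiff ℝ 1 b) : Continuous (vdiv b) :=
  (LinearMap.continuous_of_finiteDimensional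
    ((LinearMap.trace ℝ (Euc d)).comp (ContinuousLinearMap.coeLM ℝ))).comp
    (hb.continuous_fderiv one_ne_zero)

lemma Jac_pos (b : Euc d → Euc d) (X : ℝ → Euc d → Euc d) (t : ℝ) (x : Euc d) :
    0 < Jac b X t x :=
  Real.exp_pos _

namespace IsGlobalFlow

lemma continuous_time (hX : IsGlobalFlow b X) (x : Euc d) : Continuous fun t => X t x :=
  continuous_iff_continuousAt.2 fun t => (hX.2.2 x t).continuousAt

lemma intervalIntegrable_vdiv (hX : IsGlobalFlow b X) (hb : ContDiff ℝ 1 b) (x : Euc d)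
    (s t : ℝ) : IntervalIntegrable (fun r => vdiv b (X r x)) volume s t :=
  ((continuous_vdiv hb).comp (hX.continuous_time x)).intervalIntegrable s t

lemma continuous_Jac_time (hX : IsGlobalFlow b X) (hb : ContDiff ℝ 1 b) (x : Euc d) :
    Continuous fun t => Jac b X t x :=
  Real.continuous_exp.comp <|
    intervalIntegral.continuous_primitive (hX.intervalIntegrable_vdiv hb x) 0

lemma Jac_add (hX : IsGlobalFlow b X) (hb : ContDiff ℝ 1 b) (t s : ℝ) (x : Euc d) :
    Jac b X (t + s) x = Jac b X t (X s x) * Jac b X s x := by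
  have hshift : ∫ r in (0 : ℝ)..t, vdiv b (X r (X s x)) = ∫ r in s..(t + s), vdiv b (X r x) := by
    simp only [← hX.2.1]
    rw [intervalIntegral.integral_comp_add_right fun r => vdiv b (X r x), zero_add]
  unfold Jac
  rw [hshift, ← Real.exp_add, add_comm (∫ r in s..(t + s), vdiv b (X r x)),
    intervalIntegral.integral_add_adjacent_intervals] <;>
  exact hX.intervalIntegrable_vdiv hb x _ _

lemma bijective (hX : IsGlobalFlow b X) (t : ℝ) : Function.Bijective (X t) :=
  Function.bijective_iff_has_inverse.2 ⟨X (-t),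
    fun x => by rw [← hX.2.1, neg_add_cancel, hX.1],
    fun x => by rw [← hX.2.1, add_neg_cancel, hX.1]⟩

lemma isJacobianFlow (hX : IsGlobalFlow b X) (hb : ContDiff ℝ 1 b)
    (hdiff : ∀ t, ContDiff ℝ 1 (X t))
    (hdet : ∀ t x, (fderiv ℝ (X t) x).det = Jac b X t x) :
    IsJacobianFlow volume X (Jac b X) where
  zero_apply := hX.1
  add_apply := hX.2.1
  jac_pos := Jac_pos b X
  jac_add := hX.Jac_add hb
  measurable_flow := measurable_uncurry_of_continuous_of_measurable hX.continuous_time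
    fun t => (hdiff t).continuous.measurable
  measurable_jac := by
    refine measurable_uncurry_of_continuous_of_measurable (hX.continuous_Jac_time hb) fun t => ?_
    rw [← funext (hdet t)]
    exact (ContinuousLinearMap.continuous_det.comp
      ((hdiff t).continuous_fderiv one_ne_zero)).measurable
  measurePreserving t := by
    refine ⟨(hdiff t).continuous.measurable, ?_⟩
    have hmap := map_withDensity_abs_det_fderiv_eq_addHaar volume nullMeasurableSet_univ
      (fun x _ => ((hdiff t).differentiable one_ne_zero x).hasFDerivAt.hasFDerivWithinAt)
      (hX.bijective t).injective.injOn
    simpa only [hdet, ← Real.enorm_eq_ofReal_abs, Set.image_univ,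
      (hX.bijective t).surjective.range_eq, Measure.restrict_univ] using hmap

end IsGlobalFlow

end Euclidean

theorem stmt_18_general {G E : Type*} [AddGroup G] [MeasurableSpace G] [MeasurableAdd G]
    [MeasurableNeg G] [MeasurableSpace E] {ν : Measure G} [SFinite ν] [ν.IsAddRightInvariant]
    [ν.IsNegInvariant] {μ : Measure E} [SFinite μ] {X : G → E → E} {J : G → E → ℝ}
    (hX : IsJacobianFlow μ X J) {ρ₀ ρ₁ ρ₂ : E → ℝ} (hρ₀m : Measurable ρ₀) (hρ₁m : Measurable ρ₁)
    (hρ₂m : Measurable ρ₂) (hρ₀ : ∀ x, 0 ≤ ρ₀ x) (hρ₂ : ∀ x, 0 ≤ ρ₂ x)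
    (hρ : ∀ x, ρ₁ x ^ 2 ≤ ρ₀ x * ρ₂ x) (hρ₂int : Integrable ρ₂ μ)
    (hint : ∀ᵐ x ∂μ, Integrable (fun t => ρ₀ (X t x) * J t x) ν) :
    Integrable (fun x => ρ₀ x *
        ((∫ t, ρ₁ (X t x) * J t x ∂ν) / ∫ t, ρ₀ (X t x) * J t x ∂ν) ^ 2) μ ∧
      ∫ x, ρ₀ x * ((∫ t, ρ₁ (X t x) * J t x ∂ν) / ∫ t, ρ₀ (X t x) * J t x ∂ν) ^ 2 ∂μ ≤
        ∫ x, ρ₂ x ∂μ := by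
  have hle := hX.lintegral_enorm_mul_integral_div_sq_le hρ₀m hρ₂m hρ₀ hρ₂ hρ hint
  refine ⟨⟨?_, hle.trans_lt hρ₂int.hasFiniteIntegral⟩, ?_⟩
  · exact (hρ₀m.mul (((hX.measurable_integral hρ₁m).div
      (hX.measurable_integral hρ₀m)).pow_const 2)).aestronglyMeasurable
  · have habs := (enorm_integral_le_lintegral_enorm _).trans hle
    rw [← ofReal_integral_norm_eq_lintegral_enorm hρ₂int, Real.enorm_eq_ofReal_abs,
      ENNReal.ofReal_le_ofReal_iff (integral_nonneg fun _ => norm_nonneg _)] at habs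
    simpa only [Real.norm_of_nonneg (hρ₂ _)] using (le_abs_self _).trans habs

/-- NEIS never increases the variance of vanilla importance sampling
(Proposition H.1, inequality). -/
theorem stmt_18 {d : ℕ} (hd : 0 < d)
    (U0 U1 : Euc d → ℝ) (hU0c : Continuous U0) (hU1c : Continuous U1)
    (hnorm : (∫ x : Euc d, Real.exp (-(U0 x))) = 1)
    (hZ1 : Integrable (fun x : Euc d => Real.exp (-(U1 x))))
    (h2nd : Integrable (fun x : Euc d => Real.exp (-(2 * U1 x - U0 x))))
    (b : Euc d → Euc d) (hb : Admissible b)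
    (X : ℝ → Euc d → Euc d) (hX : IsGlobalFlow b X)
    (hdiff : ∀ t : ℝ, ContDiff ℝ 1 (fun x => X t x))
    (hdet : ∀ (t : ℝ) (x : Euc d), (fderiv ℝ (fun y => X t y) x).det = Jac b X t x)
    (Ω₀ : Set (Euc d)) (hΩopen : IsOpen Ω₀) (hΩfull : volume Ω₀ᶜ = 0)
    (hint : ∀ W : Euc d → ℝ, (W = U0 ∨ W = U1 ∨ W = fun x => 2 * U1 x - U0 x) →
      (∀ z ∈ Ω₀, IntegrableOn (fun t : ℝ => Real.exp (-(W (X t z))) * Jac b X t z) (Set.Ioi 0)) ∧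
      (∀ z ∈ Ω₀, IntegrableOn (fun t : ℝ => Real.exp (-(W (X t z))) * Jac b X t z) (Set.Iio 0)) ∧
      ContinuousOn (fun z => ∫ t in Set.Ioi (0:ℝ), Real.exp (-(W (X t z))) * Jac b X t z) Ω₀ ∧
      ContinuousOn (fun z => ∫ t in Set.Iio (0:ℝ), Real.exp (-(W (X t z))) * Jac b X t z) Ω₀) :
    (∫ x : Euc d, Real.exp (-(U0 x)) *
        ((∫ t : ℝ, Real.exp (-(U1 (X t x))) * Jac b X t x) /
          (∫ t : ℝ, Real.exp (-(U0 (X t x))) * Jac b X t x)) ^ 2) ≤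
      ∫ x : Euc d, Real.exp (-(2 * U1 x - U0 x)) := by
  have hint₀ : ∀ᵐ x, Integrable fun t : ℝ => Real.exp (-(U0 (X t x))) * Jac b X t x := by
    filter_upwards [show ∀ᵐ x, x ∈ Ω₀ from hΩfull] with x hx
    obtain ⟨hIoi, hIio, -⟩ := hint U0 (Or.inl rfl)
    exact integrable_of_integrableOn_Iio_Ioi (by simp) (hIio x hx) (hIoi x hx)
  exact (stmt_18_general (ρ₀ := fun x => Real.exp (-U0 x)) (ρ₁ := fun x => Real.exp (-U1 x))
    (hX.isJacobianFlow hb.1 hdiff hdet) (by fun_prop) (by fun_prop) (by fun_prop)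
    (fun _ => (Real.exp_pos _).le) (fun _ => (Real.exp_pos _).le)
    (fun x => (exp_neg_sq_eq_mul (U0 x) (U1 x)).le) h2nd hint₀).2
end
end

section
/- Orthogonal flows reproduce the vanilla estimator (equality case of Proposition H.1, converse direction). Let b be an admissible vector field with global flow X and Jacobian factor J, and let U0, U1 : ℝ^d → ℝ be continuously differentiable. Assume the orthogonality condition ⟨b(y), ∇(U1 − U0)(y)⟩ = 0 for all y ∈ ℝ^d. Then: (i) for every x ∈ ℝ^d and every t ∈ ℝ, (U1 − U0)(X t x) = (U1 − U0)(x); and (ii) for every x ∈ ℝ^d such that ∫_ℝ F^0_t(x) dt is finite and strictly positive, the infinite-time NEIS estimator satisfies A(x) = exp(−(U1(x) − U0(x))). -/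
/-!
By the chain rule, the derivative of `U1 - U0` along a flow line is `⟨b, ∇(U1 - U0)⟩ = 0`, so
`U1 - U0` is constant on orbits. On the orbit of `x` the integrand of the numerator is therefore
`exp (-(U1 x - U0 x))` times that of the denominator, whatever the weight `J` multiplying both.
-/

open MeasureTheory Filter

noncomputable section

theorem apply_eq_apply_of_isIntegralCurve_of_fderiv_eq_zero {E F : Type*}
    [NormedAddCommGroup E] [NormedSpace ℝ E] [NormedAddCommGroup F] [NormedSpace ℝ F]
    {f : E → F} {γ : ℝ → E} {v : ℝ → E → E} (hγ : IsIntegralCurve γ v)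
    (hf : ∀ t, DifferentiableAt ℝ f (γ t)) (hfv : ∀ t, fderiv ℝ f (γ t) (v t (γ t)) = 0) (s t : ℝ) :
    f (γ s) = f (γ t) := by
  have hderiv (τ : ℝ) : HasDerivAt (f ∘ γ) 0 τ :=
    hfv τ ▸ (hf τ).hasFDerivAt.comp_hasDerivAt τ (hγ τ)
  exact is_const_of_deriv_eq_zero (fun τ ↦ (hderiv τ).differentiableAt)
    (fun τ ↦ (hderiv τ).deriv) s t

theorem apply_eq_apply_of_isIntegralCurve_of_inner_gradient_eq_zero {E : Type*}
    [NormedAddCommGroup E] [InnerProductSpace ℝ E] [CompleteSpace E] {f : E → ℝ} {γ : ℝ → E}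
    {v : ℝ → E → E} (hγ : IsIntegralCurve γ v) (hf : ∀ t, DifferentiableAt ℝ f (γ t))
    (hfv : ∀ t, inner ℝ (v t (γ t)) (gradient f (γ t)) = 0) (s t : ℝ) :
    f (γ s) = f (γ t) :=
  apply_eq_apply_of_isIntegralCurve_of_fderiv_eq_zero hγ hf
    (fun τ ↦ by rw [← inner_gradient_left, real_inner_comm, hfv τ]) s t

theorem integral_exp_neg_mul_eq_of_sub_ae_eq_const {α : Type*} [MeasurableSpace α]
    {μ : Measure α} {u₀ u₁ w : α → ℝ} {c : ℝ} (hc : ∀ᵐ a ∂μ, u₁ a - u₀ a = c) :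
    ∫ a, Real.exp (-u₁ a) * w a ∂μ = Real.exp (-c) * ∫ a, Real.exp (-u₀ a) * w a ∂μ := by
  rw [← integral_const_mul]
  refine integral_congr_ae (hc.mono fun a ha ↦ ?_)
  have hexp : Real.exp (-u₁ a) = Real.exp (-c) * Real.exp (-u₀ a) := by
    rw [← Real.exp_add, ← ha]
    ring_nf
  simp only [hexp, mul_assoc]

theorem stmt_19_general {E : Type*} [NormedAddCommGroup E] [InnerProductSpace ℝ E]
    [CompleteSpace E] {b : E → E} {X : ℝ → E → E} (hX_zero : ∀ x, X 0 x = x)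
    (hX : ∀ x, IsIntegralCurve (fun t ↦ X t x) (fun _ ↦ b)) {U0 U1 : E → ℝ}
    (hU : Differentiable ℝ (fun z ↦ U1 z - U0 z))
    (horth : ∀ y, inner ℝ (b y) (gradient (fun z ↦ U1 z - U0 z) y) = 0) (J : ℝ → E → ℝ) :
    (∀ (x : E) (t : ℝ), U1 (X t x) - U0 (X t x) = U1 x - U0 x) ∧
    ∀ x : E,
      (∫ t : ℝ, Real.exp (-(U0 (X t x))) * J t x) ≠ 0 →
      (∫ t : ℝ, Real.exp (-(U1 (X t x))) * J t x) /
          (∫ t : ℝ, Real.exp (-(U0 (X t x))) * J t x) =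
        Real.exp (-(U1 x - U0 x)) := by
  have hconst (x : E) (t : ℝ) : U1 (X t x) - U0 (X t x) = U1 x - U0 x := by
    simpa only [hX_zero] using apply_eq_apply_of_isIntegralCurve_of_inner_gradient_eq_zero
      (hX x) (fun τ ↦ hU (X τ x)) (fun τ ↦ horth (X τ x)) t 0
  refine ⟨hconst, fun x hne ↦ ?_⟩
  rw [integral_exp_neg_mul_eq_of_sub_ae_eq_const (ae_of_all volume (hconst x)),
    mul_div_cancel_right₀ _ hne]

/-- Orthogonal flows reproduce the vanilla estimator
(equality case of Proposition H.1, converse direction). -/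
theorem stmt_19 {d : ℕ} (hd : 0 < d)
    (b : Euc d → Euc d) (hb : Admissible b)
    (X : ℝ → Euc d → Euc d) (hX : IsGlobalFlow b X)
    (U0 U1 : Euc d → ℝ) (hU0 : ContDiff ℝ 1 U0) (hU1 : ContDiff ℝ 1 U1)
    (horth : ∀ y : Euc d,
      @inner ℝ _ _ (b y) (gradient (fun z => U1 z - U0 z) y) = (0 : ℝ)) :
    (∀ (x : Euc d) (t : ℝ), U1 (X t x) - U0 (X t x) = U1 x - U0 x) ∧
    ∀ x : Euc d,
      Integrable (fun t : ℝ => Real.exp (-(U0 (X t x))) * Jac b X t x) →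
      0 < (∫ t : ℝ, Real.exp (-(U0 (X t x))) * Jac b X t x) →
      (∫ t : ℝ, Real.exp (-(U1 (X t x))) * Jac b X t x) /
          (∫ t : ℝ, Real.exp (-(U0 (X t x))) * Jac b X t x) =
        Real.exp (-(U1 x - U0 x)) := by
  obtain ⟨hconst, hratio⟩ := stmt_19_general hX.1 hX.2.2
    ((hU1.differentiable one_ne_zero).sub (hU0.differentiable one_ne_zero)) horth (Jac b X)
  exact ⟨hconst, fun x _ hpos ↦ hratio x hpos.ne'⟩
end
end
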